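/- Let n ≥ 2, 1 ≤ k ≤ n − 2, and τ ∈ ℚ with τ ≥ 0, and set E = Σ_{i=1}^{k} (n − i) + τ·(n − k)·(n − k − 1), which is positive. For every top-k profile p : (Fin k ↪ Fin n) → ℚ and every candidate c, T_b(p)(c) = (1/2)·( Σ_{d ≠ c} (P^k_τ(p)(c, d) − P^k_τ(p)(d, c)) + ((n − 1)/E)·Σ_{c' ≠ d'} P^k_τ(p)(c', d') ), where b : Fin (k+1) → ℚ is given by b(i) = n − 1 − i for i < k and b(k) = (n − k − 1)/2. In other words, T_b is recoverable from the generalized pairs map P^k_τ. -/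

import Mathlib

/-- The weight `w*(f, c)` that a top-`k` ballot `f : Fin k ↪ Fin n` assigns to
candidate `c` under a weighting vector `w : Fin (k+1) → ℚ`. -/
def topkWeight {n k : ℕ} (w : Fin (k + 1) → ℚ) (f : Fin k ↪ Fin n) (c : Fin n) : ℚ :=
  (∑ i : Fin k, if f i = c then w i.castSucc else 0) +
    (if ∀ i, f i ≠ c then w (Fin.last k) else 0)

/-- The contribution `u_f(c, d)` of a top-`k` ballot `f` to the generalized
pairs map `P^k_τ`. -/
def pairContribution {n k : ℕ} (τ : ℚ) (f : Fin k ↪ Fin n) (c d : Fin n) : ℚ :=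
  if c = d then 0
  else if ∃ i, f i = c ∧ ∀ j, f j = d → i < j then 1
  else if (¬ ∃ i, f i = c) ∧ (¬ ∃ j, f j = d) then τ
  else 0

/-!
Fix a ballot. In the difference between the total that `c` scores over the other candidates and the
total they score over `c`, the `τ`-terms cancel, and adding `n - 1` leaves twice the averaged Borda
weight of `c`. The sum of all the pair contributions of a ballot is the same number `E` for every
ballot, so the total of the pairs map divided by `E` recovers the weight `∑ f, p f` of the profile,
and with it the contribution of the shift by `n - 1`. The formula follows by summing over ballots.
-/

open Finset

section Unranked

variable {ι α : Type*} [Fintype ι] [Fintype α] [DecidableEq α]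

/-- The finset of candidates missing from the range of a ballot `f`. -/
def unranked (f : ι ↪ α) : Finset α := (univ.map f)ᶜ

theorem mem_unranked {f : ι ↪ α} {c : α} : c ∈ unranked f ↔ ∀ i, f i ≠ c := by
  simp [unranked]

theorem mem_unranked_or_exists_apply_eq (f : ι ↪ α) (c : α) : c ∈ unranked f ∨ ∃ i, f i = c := by
  rw [mem_unranked]
  exact (em _).symm.imp_left not_exists.mp

theorem card_unranked (f : ι ↪ α) : #(unranked f) = Fintype.card α - Fintype.card ι := by
  rw [unranked, card_compl, card_map, card_univ]

theorem sum_eq_sum_apply_add_sum_unranked {M : Type*} [AddCommMonoid M] (f : ι ↪ α) (g : α → M) :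
    ∑ c, g c = ∑ i, g (f i) + ∑ c ∈ unranked f, g c := by
  rw [unranked, ← sum_map univ f g, sum_add_sum_compl]

end Unranked

section Ballot

variable {n k : ℕ} {f : Fin k ↪ Fin n} {c d : Fin n}

theorem cast_card_unranked (f : Fin k ↪ Fin n) : (#(unranked f) : ℚ) = n - k := by
  have hkn : k ≤ n := by simpa using Fintype.card_le_of_embedding f
  rw [card_unranked, Fintype.card_fin, Fintype.card_fin, Nat.cast_sub hkn]

theorem topkWeight_apply (w : Fin (k + 1) → ℚ) (f : Fin k ↪ Fin n) (i : Fin k) :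
    topkWeight w f (f i) = w i.castSucc := by
  simp [topkWeight]

theorem topkWeight_of_mem_unranked (w : Fin (k + 1) → ℚ) (hc : c ∈ unranked f) :
    topkWeight w f c = w (Fin.last k) := by
  simp [topkWeight, mem_unranked.mp hc]

variable (τ : ℚ)

theorem pairContribution_self (f : Fin k ↪ Fin n) (c : Fin n) : pairContribution τ f c c = 0 := by
  simp [pairContribution]

theorem pairContribution_apply_apply (f : Fin k ↪ Fin n) (i j : Fin k) :
    pairContribution τ f (f i) (f j) = if i < j then 1 else 0 := by
  simp +contextual [pairContribution]

theorem pairContribution_apply_of_mem_unranked (hd : d ∈ unranked f) (i : Fin k) :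
    pairContribution τ f (f i) d = 1 := by
  simp [pairContribution, mem_unranked.mp hd]

theorem pairContribution_of_mem_unranked_apply (hc : c ∈ unranked f) (j : Fin k) :
    pairContribution τ f c (f j) = 0 := by
  simp [pairContribution, mem_unranked.mp hc]

theorem pairContribution_of_mem_unranked (hc : c ∈ unranked f) (hd : d ∈ unranked f) :
    pairContribution τ f c d = if c = d then 0 else τ := by
  simp [pairContribution, mem_unranked.mp hc, mem_unranked.mp hd]

theorem pairContribution_comm_of_mem_unranked (hc : c ∈ unranked f) (hd : d ∈ unranked f) :
    pairContribution τ f c d = pairContribution τ f d c := by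
  simp only [pairContribution_of_mem_unranked τ, hc, hd, eq_comm]

theorem sum_pairContribution_apply_left (f : Fin k ↪ Fin n) (i : Fin k) :
    ∑ d, pairContribution τ f (f i) d = n - 1 - i := by
  have sum_ranked : ∑ j, pairContribution τ f (f i) (f j) = (k : ℚ) - 1 - i := by
    have hcard : #(Ioi i) + 1 + i = k := by rw [Fin.card_Ioi]; omega
    simp only [pairContribution_apply_apply, sum_boole, filter_lt_eq_Ioi]
    linarith [show (#(Ioi i) + 1 + i : ℚ) = k from mod_cast hcard]
  have sum_unranked : ∑ d ∈ unranked f, pairContribution τ f (f i) d = (n : ℚ) - k := by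
    rw [sum_congr rfl fun d hd => pairContribution_apply_of_mem_unranked τ hd i,
      sum_const, nsmul_one, cast_card_unranked]
  rw [sum_eq_sum_apply_add_sum_unranked f, sum_ranked, sum_unranked]
  ring

theorem sum_pairContribution_apply_right (f : Fin k ↪ Fin n) (i : Fin k) :
    ∑ d, pairContribution τ f d (f i) = i := by
  rw [sum_eq_sum_apply_add_sum_unranked f,
    sum_eq_zero fun d hd => pairContribution_of_mem_unranked_apply τ hd i]
  simp only [pairContribution_apply_apply, sum_boole, filter_gt_eq_Iio, Fin.card_Iio, add_zero]

theorem sum_unranked_pairContribution_left (hc : c ∈ unranked f) :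
    ∑ d ∈ unranked f, pairContribution τ f c d = τ * (n - k - 1) := by
  rw [sum_congr rfl fun d hd => pairContribution_of_mem_unranked τ hc hd]
  have hsplit : ∀ d, (if c = d then 0 else τ) = τ - if c = d then τ else 0 := by
    intro d
    split_ifs <;> simp
  simp only [hsplit, sum_sub_distrib, sum_const, nsmul_eq_mul, cast_card_unranked, sum_ite_eq,
    if_pos hc]
  ring

theorem sum_pairContribution_left_of_mem_unranked (hc : c ∈ unranked f) :
    ∑ d, pairContribution τ f c d = τ * (n - k - 1) := by
  rw [sum_eq_sum_apply_add_sum_unranked f, sum_unranked_pairContribution_left τ hc,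
    sum_eq_zero fun j _ => pairContribution_of_mem_unranked_apply τ hc j, zero_add]

theorem sum_pairContribution_right_of_mem_unranked (hc : c ∈ unranked f) :
    ∑ d, pairContribution τ f d c = k + τ * (n - k - 1) := by
  rw [sum_eq_sum_apply_add_sum_unranked f,
    sum_congr rfl fun i _ => pairContribution_apply_of_mem_unranked τ hc i,
    sum_congr rfl fun d hd => pairContribution_comm_of_mem_unranked τ hd hc,
    sum_unranked_pairContribution_left τ hc]
  simp

/-- The constant `E` of the paper: the sum of all pair contributions of a single ballot. -/
def pairTotal (n k : ℕ) (τ : ℚ) : ℚ :=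
  (∑ i ∈ range k, ((n : ℚ) - (i + 1))) + τ * ((n : ℚ) - k) * ((n : ℚ) - k - 1)

theorem sum_sum_pairContribution (f : Fin k ↪ Fin n) :
    ∑ c, ∑ d, pairContribution τ f c d = pairTotal n k τ := by
  rw [sum_eq_sum_apply_add_sum_unranked f,
    sum_congr rfl fun c hc => sum_pairContribution_left_of_mem_unranked τ hc,
    sum_const, nsmul_eq_mul, cast_card_unranked, pairTotal,
    ← Fin.sum_univ_eq_sum_range fun i => (n : ℚ) - (i + 1)]
  simp only [sum_pairContribution_apply_left, sub_sub, add_comm]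
  ring

/-- The averaged Borda weighting vector `b`: Borda scores for the ranked positions, and for an
unranked candidate the mean of the Borda scores `0, …, n - k - 1` that are left over. -/
def averagedBorda (n k : ℕ) (i : Fin (k + 1)) : ℚ :=
  if (i : ℕ) < k then (n : ℚ) - 1 - ((i : ℕ) : ℚ) else ((n : ℚ) - k - 1) / 2

theorem averagedBorda_castSucc (n : ℕ) (i : Fin k) :
    averagedBorda n k i.castSucc = n - 1 - i := by
  simp [averagedBorda]

theorem averagedBorda_last (n k : ℕ) : averagedBorda n k (Fin.last k) = (n - k - 1) / 2 := by
  simp [averagedBorda]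

theorem topkWeight_averagedBorda (f : Fin k ↪ Fin n) (c : Fin n) :
    topkWeight (averagedBorda n k) f c =
      1 / 2 * (∑ d, pairContribution τ f c d - ∑ d, pairContribution τ f d c + (n - 1)) := by
  obtain hc | ⟨i, rfl⟩ := mem_unranked_or_exists_apply_eq f c
  · rw [topkWeight_of_mem_unranked _ hc, averagedBorda_last,
      sum_pairContribution_left_of_mem_unranked τ hc,
      sum_pairContribution_right_of_mem_unranked τ hc]
    ring
  · rw [topkWeight_apply, averagedBorda_castSucc, sum_pairContribution_apply_left,
      sum_pairContribution_apply_right]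
    ring

end Ballot

theorem pairTotal_pos {n k : ℕ} {τ : ℚ} (hk : 0 < k) (hkn : k < n) (hτ : 0 ≤ τ) :
    0 < pairTotal n k τ := by
  have hkn' : (k : ℚ) + 1 ≤ n := mod_cast hkn
  have ranked_pos : 0 < ∑ i ∈ range k, ((n : ℚ) - (i + 1)) := by
    refine sum_pos (fun i hi => ?_) (nonempty_range_iff.mpr hk.ne')
    have hik : (i : ℚ) + 1 ≤ k := mod_cast mem_range.mp hi
    linarith
  have unranked_nonneg : 0 ≤ τ * ((n : ℚ) - k) * ((n : ℚ) - k - 1) :=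
    mul_nonneg (mul_nonneg hτ (by linarith)) (by linarith)
  exact add_pos_of_pos_of_nonneg ranked_pos unranked_nonneg

section Profile

variable {n k : ℕ}

/-- The positional map `T_w`, sending a top-`k` profile to the score of each candidate. -/
noncomputable def positionalMap (w : Fin (k + 1) → ℚ) (p : (Fin k ↪ Fin n) → ℚ) (c : Fin n) : ℚ :=
  ∑ f : Fin k ↪ Fin n, p f * topkWeight w f c

/-- The generalized pairs map `P^k_τ`, sending a top-`k` profile to its pairwise comparisons. -/
noncomputable def generalizedPairs (τ : ℚ) (p : (Fin k ↪ Fin n) → ℚ) (c d : Fin n) : ℚ :=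
  ∑ f : Fin k ↪ Fin n, p f * pairContribution τ f c d

variable (τ : ℚ) (p : (Fin k ↪ Fin n) → ℚ)

theorem generalizedPairs_self (c : Fin n) : generalizedPairs τ p c c = 0 := by
  simp [generalizedPairs, pairContribution_self]

theorem sum_generalizedPairs_sub_generalizedPairs (c : Fin n) :
    ∑ d with d ≠ c, (generalizedPairs τ p c d - generalizedPairs τ p d c) =
      ∑ f, p f * (∑ d, pairContribution τ f c d - ∑ d, pairContribution τ f d c) := by
  calc
    _ = ∑ d, (generalizedPairs τ p c d - generalizedPairs τ p d c) :=
      sum_filter_of_ne fun d _ => mt <| by rintro rfl; exact sub_self _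
    _ = ∑ d, ∑ f, p f * (pairContribution τ f c d - pairContribution τ f d c) := by
      simp only [generalizedPairs, mul_sub, sum_sub_distrib]
    _ = _ := by
      rw [sum_comm]
      simp only [← mul_sum, sum_sub_distrib]

theorem sum_generalizedPairs :
    ∑ q : Fin n × Fin n with q.1 ≠ q.2, generalizedPairs τ p q.1 q.2 =
      pairTotal n k τ * ∑ f, p f := by
  calc
    _ = ∑ q : Fin n × Fin n, generalizedPairs τ p q.1 q.2 :=
      sum_filter_of_ne fun q _ => mt fun hq => by rw [hq, generalizedPairs_self]
    _ = ∑ f, p f * ∑ c, ∑ d, pairContribution τ f c d := by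
      simp only [generalizedPairs]
      rw [sum_comm]
      simp only [← mul_sum, Fintype.sum_prod_type]
    _ = _ := by
      simp only [sum_sum_pairContribution, ← sum_mul, mul_comm]

variable {τ} in
theorem averaged_borda_recoverable_from_generalized_pairs_general (hE : pairTotal n k τ ≠ 0)
    (c : Fin n) :
    positionalMap (averagedBorda n k) p c =
      1 / 2 * ((∑ d with d ≠ c, (generalizedPairs τ p c d - generalizedPairs τ p d c)) +
        (n - 1) / pairTotal n k τ *
          ∑ q : Fin n × Fin n with q.1 ≠ q.2, generalizedPairs τ p q.1 q.2) := by
  rw [sum_generalizedPairs_sub_generalizedPairs, sum_generalizedPairs, ← mul_assoc,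
    div_mul_cancel₀ _ hE, mul_sum, ← sum_add_distrib, mul_sum]
  refine sum_congr rfl fun f _ => ?_
  rw [topkWeight_averagedBorda τ]
  ring

end Profile

/-- For `n ≥ 2`, `1 ≤ k ≤ n − 2` and `τ ≥ 0`, the constant
`E = Σ_{i=1}^k (n − i) + τ·(n − k)·(n − k − 1)` is positive, and the averaged
Borda positional map `T_b` is recovered from the generalized pairs map `P^k_τ`
via `T_b(p)(c) = ½(Σ_{d ≠ c} (P(c,d) − P(d,c)) + ((n−1)/E)·Σ_{c' ≠ d'} P(c',d'))`,
where `b(i) = n − 1 − i` for `i < k` and `b(k) = (n − k − 1)/2`. -/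
theorem averaged_borda_recoverable_from_generalized_pairs (n k : ℕ) (hn : 2 ≤ n)
    (hk1 : 1 ≤ k) (hk2 : k ≤ n - 2) (τ : ℚ) (hτ : 0 ≤ τ)
    (E : ℚ)
    (hE : E = (∑ i ∈ Finset.range k, ((n : ℚ) - (i + 1))) +
      τ * ((n : ℚ) - k) * ((n : ℚ) - k - 1)) :
    0 < E ∧
    ∀ (p : (Fin k ↪ Fin n) → ℚ) (c : Fin n),
      ∑ f : Fin k ↪ Fin n, p f *
          topkWeight (fun i : Fin (k + 1) =>
            if (i : ℕ) < k then (n : ℚ) - 1 - ((i : ℕ) : ℚ)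
            else ((n : ℚ) - k - 1) / 2) f c =
        (1 / 2) *
          ((∑ d ∈ Finset.univ.filter (fun d : Fin n => d ≠ c),
              ((∑ f : Fin k ↪ Fin n, p f * pairContribution τ f c d) -
                ∑ f : Fin k ↪ Fin n, p f * pairContribution τ f d c)) +
            ((n : ℚ) - 1) / E *
              ∑ q ∈ Finset.univ.filter (fun q : Fin n × Fin n => q.1 ≠ q.2),
                ∑ f : Fin k ↪ Fin n, p f * pairContribution τ f q.1 q.2) := by
  have hpos : 0 < pairTotal n k τ := pairTotal_pos hk1 (by omega) hτ
  subst hE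
  exact ⟨hpos, fun p => averaged_borda_recoverable_from_generalized_pairs_general p hpos.ne'⟩
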